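/- For every t > 0, the total variation of the solution satisfies |u(t)|_{W^{1,1}} = ∫_{S¹} |u_x(t,x)| dx = 2∫_{S¹} u_x(t,x)⁺ dx ≤ 2 min(D, σ⁻¹ t⁻¹). -/

import Mathlib

open MeasureTheory Set
open scoped ENNReal

/-- The `L^p` norm (on the circle, i.e. over one period `(0,1]`) of the `m`-th
derivative of a function `v : ℝ → ℝ` (identified with a function on `S¹ = ℝ/ℤ`). -/
noncomputable def sobLp (m : ℕ) (p : ℝ≥0∞) (v : ℝ → ℝ) : ℝ :=
  (eLpNorm (iteratedDeriv m v) p (volume.restrict (Ioc (0:ℝ) 1))).toReal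

/-- `u` is a smooth, space-periodic, zero-mean-value solution of the generalised
Burgers equation `u_t + f'(u) u_x - ν u_xx = 0` with strongly convex `f` and
nonzero initial condition. -/
structure IsBurgersSolution (f : ℝ → ℝ) (σ ν : ℝ) (u : ℝ → ℝ → ℝ) : Prop where
  hf : ContDiff ℝ (⊤ : ℕ∞) f
  hσ : 0 < σ
  hconv : ∀ y, σ ≤ iteratedDeriv 2 f y
  hν : 0 < ν
  hu : ContDiffOn ℝ (⊤ : ℕ∞) (Function.uncurry u) (Ici (0:ℝ) ×ˢ univ)
  hper : ∀ t x, u t (x + 1) = u t x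
  hpde : ∀ t, 0 < t → ∀ x,
    deriv (fun s => u s x) t + deriv f (u t x) * deriv (u t) x
      - ν * deriv (deriv (u t)) x = 0
  hmean : ∀ t, 0 ≤ t → ∫ x in Ioc (0:ℝ) 1, u t x = 0
  hinit : ∃ x, u 0 x ≠ 0

/-- The quantity `D = max(|u₀|₁⁻¹, |u₀|_{1,∞})`. -/
noncomputable def burgersD (u : ℝ → ℝ → ℝ) : ℝ :=
  max (sobLp 0 1 (u 0))⁻¹ (sobLp 1 ⊤ (u 0))

/-- `T₁ = D⁻² C̃⁻¹ / 4`. -/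
noncomputable def burgersT₁ (D Ct : ℝ) : ℝ := (D ^ 2)⁻¹ * Ct⁻¹ / 4

/-- `T₂ = max(3T₁/2, 2Dσ⁻¹)`. -/
noncomputable def burgersT₂ (σ D Ct : ℝ) : ℝ :=
  max (3 / 2 * burgersT₁ D Ct) (2 * D * σ⁻¹)

/-- Time average over `[T₁, T₂]`. -/
noncomputable def timeAvg (T₁ T₂ : ℝ) (A : ℝ → ℝ) : ℝ :=
  (T₂ - T₁)⁻¹ * ∫ t in T₁..T₂, A t

/-- The structure function `S_p(ℓ)`. -/
noncomputable def structFun (T₁ T₂ : ℝ) (u : ℝ → ℝ → ℝ) (p ℓ : ℝ) : ℝ :=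
  timeAvg T₁ T₂ (fun t => ∫ x in Ioc (0:ℝ) 1, |u t (x + ℓ) - u t x| ^ p)

/-!
Let `v = u_x` and suppose that `v(0, ·) ≤ M`. Differentiating the equation in space gives
`v_t + f'(u) v_x + f''(u) v² = ν v_xx`, so at a positive spatial maximum `v_t ≤ -σ v²`. Hence `v`
stays below the solution `M / (1 + σ M t)` of the Riccati equation `y' = -σ y²`: one applies the
maximum principle to `w = (1 + σ M t) v`, whose time derivative is at most `σ v (M - w)` at a
positive spatial maximum. This one-sided bound controls the total variation because `v` has mean
zero, and it is below both `M` and `1 / (σ t)`.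
-/

open Filter Function
open scoped Topology

section Slices

variable {𝕜 E F : Type*} [NontriviallyNormedField 𝕜]
  [NormedAddCommGroup E] [NormedSpace 𝕜 E] [NormedAddCommGroup F] [NormedSpace 𝕜 F]

lemma hasDerivAt_slice_fst {G : 𝕜 × E → F} {t : 𝕜} {x : E} (hG : DifferentiableAt 𝕜 G (t, x)) :
    HasDerivAt (fun s => G (s, x)) (fderiv 𝕜 G (t, x) (1, 0)) t :=
  hG.hasFDerivAt.comp_hasDerivAt t ((hasDerivAt_id t).prodMk (hasDerivAt_const t x))

lemma hasDerivAt_slice_snd {G : E × 𝕜 → F} {t : E} {x : 𝕜} (hG : DifferentiableAt 𝕜 G (t, x)) :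
    HasDerivAt (fun y => G (t, y)) (fderiv 𝕜 G (t, x) (0, 1)) x :=
  hG.hasFDerivAt.comp_hasDerivAt x ((hasDerivAt_const x t).prodMk (hasDerivAt_id x))

lemma contDiff_slice {n : WithTop ℕ∞} {s : Set E} {u : E → 𝕜 → F}
    (hu : ContDiffOn 𝕜 n (uncurry u) (s ×ˢ univ)) {t : E} (ht : t ∈ s) : ContDiff 𝕜 n (u t) :=
  hu.comp_contDiff (contDiff_prodMk_right t) fun _ => ⟨ht, mem_univ _⟩

lemma continuousOn_deriv_slice {s : Set E} (hs : UniqueDiffOn 𝕜 s) {u : E → 𝕜 → F}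
    (hu : ContDiffOn 𝕜 1 (uncurry u) (s ×ˢ univ)) :
    ContinuousOn (uncurry fun t => deriv (u t)) (s ×ˢ univ) := by
  have hcont : ContinuousOn (fun p => fderivWithin 𝕜 (uncurry u) (s ×ˢ univ) p (0, 1))
      (s ×ˢ univ) :=
    (hu.continuousOn_fderivWithin (hs.prod uniqueDiffOn_univ) le_rfl).clm_apply
      continuousOn_const
  refine hcont.congr ?_
  rintro ⟨t, x⟩ htx
  have hfderiv := (hu.differentiableOn one_ne_zero (t, x) htx).hasFDerivWithinAt
  have hslice := hfderiv.comp_hasDerivWithinAt (s := univ) x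
    ((hasDerivAt_const x t).prodMk (hasDerivAt_id x)).hasDerivWithinAt
    fun _ _ => ⟨htx.1, mem_univ _⟩
  exact (hasDerivWithinAt_univ.1 hslice).deriv

end Slices

section MixedPartials

variable {𝕜 F : Type*} [RCLike 𝕜] [NormedAddCommGroup F] [NormedSpace 𝕜 F]

lemma hasDerivAt_deriv_slice {u : 𝕜 → 𝕜 → F} {t x : 𝕜} (hu : ContDiffAt 𝕜 2 (uncurry u) (t, x)) :
    HasDerivAt (fun s => deriv (u s) x) (deriv (fun y => deriv (fun s => u s y) t) x) t := by
  have hdiff : ∀ᶠ p in 𝓝 (t, x), DifferentiableAt 𝕜 (uncurry u) p :=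
    (hu.eventually (by simp)).mono fun p hp => hp.differentiableAt two_ne_zero
  have hdiff₂ : DifferentiableAt 𝕜 (fderiv 𝕜 (uncurry u)) (t, x) :=
    (hu.fderiv_right (m := 1) le_rfl).differentiableAt one_ne_zero
  have hspace : (fun s => deriv (u s) x) =ᶠ[𝓝 t] fun s => fderiv 𝕜 (uncurry u) (s, x) (0, 1) :=
    ((Continuous.prodMk_left x).tendsto t |>.eventually hdiff).mono
      fun s hs => (hasDerivAt_slice_snd hs).deriv
  have htime : (fun y => deriv (fun s => u s y) t) =ᶠ[𝓝 x]
      fun y => fderiv 𝕜 (uncurry u) (t, y) (1, 0) :=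
    ((Continuous.prodMk_right t).tendsto x |>.eventually hdiff).mono
      fun y hy => (hasDerivAt_slice_fst hy).deriv
  have hts := (hasDerivAt_slice_fst hdiff₂).clm_apply (hasDerivAt_const t ((0 : 𝕜), (1 : 𝕜)))
  have hst := (hasDerivAt_slice_snd hdiff₂).clm_apply (hasDerivAt_const x ((1 : 𝕜), (0 : 𝕜)))
  have hsymm : IsSymmSndFDerivAt 𝕜 (uncurry u) (t, x) := hu.isSymmSndFDerivAt (by simp)
  refine (hts.congr_of_eventuallyEq hspace).congr_deriv ?_
  rw [(hst.congr_of_eventuallyEq htime).deriv, map_zero, add_zero, add_zero]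
  exact hsymm _ _

end MixedPartials

lemma deriv_deriv_nonpos_of_isLocalMax {g : ℝ → ℝ} {x : ℝ} (hg : ContinuousAt g x)
    (hmax : IsLocalMax g x) : deriv (deriv g) x ≤ 0 := by
  by_contra! hpos
  have hmin : IsLocalMin g x := isLocalMin_of_deriv_deriv_pos hpos hmax.deriv_eq_zero hg
  have hconst : g =ᶠ[𝓝 x] fun _ => g x := by
    filter_upwards [hmin, hmax] with y hy hy' using le_antisymm hy' hy
  have hzero : deriv (deriv g) x = 0 := by simpa using hconst.deriv.deriv_eq
  exact hpos.ne' hzero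

lemma nonneg_of_hasDerivWithinAt_of_isLocalMaxOn_Iic {g : ℝ → ℝ} {t d : ℝ}
    (hd : HasDerivWithinAt g d (Iic t) t) (hmax : IsLocalMaxOn g (Iic t) t) : 0 ≤ d := by
  have hcone : (-1 : ℝ) ∈ posTangentConeAt (Iic t) t :=
    mem_posTangentConeAt_of_segment_subset
      ((convex_Iic t).segment_subset self_mem_Iic (by simp))
  simpa using hmax.hasFDerivWithinAt_nonpos hd.hasFDerivWithinAt hcone

theorem le_of_forall_spatial_max_hasDerivAt_neg {w : ℝ → ℝ → ℝ} {a b c C : ℝ} (hc : 0 < c)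
    (hper : ∀ t ∈ Icc a b, Periodic (w t) c) (hcont : ContinuousOn (uncurry w) (Icc a b ×ˢ univ))
    (hinit : ∀ x, w a x ≤ C)
    (hneg : ∀ t ∈ Ioc a b, ∀ x, (∀ y, w t y ≤ w t x) → C < w t x →
      ∃ d < 0, HasDerivAt (fun s => w s x) d t)
    {t : ℝ} (ht : t ∈ Icc a b) (x : ℝ) : w t x ≤ C := by
  obtain ⟨⟨t₀, x₀⟩, ⟨ht₀, -⟩, hmaxOn⟩ := (isCompact_Icc.prod isCompact_Icc).exists_isMaxOn
    ⟨(t, 0), ht, left_mem_Icc.2 hc.le⟩ (hcont.mono (prod_mono_right (subset_univ (Icc 0 c))))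
  have hmax : ∀ s ∈ Icc a b, ∀ y, w s y ≤ w t₀ x₀ := by
    intro s hs y
    obtain ⟨z, hz, hyz⟩ := (hper s hs).exists_mem_Ico₀ hc y
    rw [hyz]
    exact hmaxOn (show (s, z) ∈ Icc a b ×ˢ Icc 0 c from ⟨hs, Ico_subset_Icc_self hz⟩)
  refine (hmax t ht x).trans (le_of_not_gt fun hlt => ?_)
  have hat₀ : a < t₀ := ht₀.1.lt_of_ne fun h => (h ▸ hinit x₀).not_gt hlt
  obtain ⟨d, hd, hderiv⟩ := hneg t₀ ⟨hat₀, ht₀.2⟩ x₀ (hmax t₀ ht₀) hlt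
  have hleft : IsLocalMaxOn (fun s => w s x₀) (Iic t₀) t₀ := by
    filter_upwards [self_mem_nhdsWithin, nhdsWithin_le_nhds (lt_mem_nhds hat₀)] with s hs has
    exact hmax s ⟨has.le, hs.trans ht₀.2⟩ x₀
  exact hd.not_ge (nonneg_of_hasDerivWithinAt_of_isLocalMaxOn_Iic hderiv.hasDerivWithinAt hleft)

lemma periodic_deriv {𝕜 F : Type*} [NontriviallyNormedField 𝕜] [NormedAddCommGroup F]
    [NormedSpace 𝕜 F] {g : 𝕜 → F} {c : 𝕜} (hg : Periodic g c) : Periodic (deriv g) c := fun x => by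
  rw [← deriv_comp_add_const, hg.funext]

lemma integral_deriv_Ioc_eq_zero_of_periodic {E : Type*} [NormedAddCommGroup E] [NormedSpace ℝ E]
    [CompleteSpace E] {g : ℝ → E} {c : ℝ} (hc : 0 ≤ c) (hg : ContDiff ℝ 1 g)
    (hper : Periodic g c) (a : ℝ) : ∫ x in Ioc a (a + c), deriv g x = 0 := by
  rw [← intervalIntegral.integral_of_le (le_add_of_nonneg_right hc),
    intervalIntegral.integral_deriv_eq_sub (fun x _ => hg.differentiable one_ne_zero x)
      (hg.continuous_deriv_one.intervalIntegrable _ _), hper a, sub_self]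

section Integrals

variable {α : Type*} {m : MeasurableSpace α} {μ : Measure α} {g : α → ℝ}

lemma integral_abs_eq_two_mul_integral_max_zero (hg : Integrable g μ)
    (hzero : ∫ x, g x ∂μ = 0) :
    ∫ x, |g x| ∂μ = 2 * ∫ x, max (g x) 0 ∂μ := by
  have habs : ∀ y : ℝ, |y| = 2 * max y 0 - y := fun y => by
    linarith [max_zero_add_max_neg_zero_eq_abs_self y, max_zero_sub_max_neg_zero_eq_self y]
  simp only [habs]
  rw [integral_sub (hg.pos_part.const_mul 2) hg, hzero, integral_const_mul, sub_zero]

lemma integral_max_zero_le_of_le [IsProbabilityMeasure μ] {C : ℝ} (hC : 0 ≤ C) (hg : ∀ x, g x ≤ C) :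
    ∫ x, max (g x) 0 ∂μ ≤ C := by
  calc ∫ x, max (g x) 0 ∂μ ≤ ∫ _, C ∂μ :=
        integral_mono_of_nonneg (.of_forall fun _ => le_max_right _ _) (integrable_const C)
          (.of_forall fun x => max_le (hg x) hC)
    _ = C := by simp

end Integrals

section SupNorm

variable {E : Type*} [NormedAddCommGroup E]

lemma norm_le_toReal_eLpNorm_top_of_continuousOn {X : Type*} [TopologicalSpace X]
    {m : MeasurableSpace X} {μ : Measure X} [μ.IsOpenPosMeasure] {g : X → E} {s : Set X}
    (hg : ContinuousOn g s) (hmem : MemLp g ⊤ (μ.restrict s)) (hs : s ⊆ closure (interior s))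
    {x : X} (hx : x ∈ s) : ‖g x‖ ≤ (eLpNorm g ⊤ (μ.restrict s)).toReal := by
  set K := (eLpNorm g ⊤ (μ.restrict s)).toReal
  have hae : (fun y => min ‖g y‖ K) =ᵐ[μ.restrict s] fun y => ‖g y‖ := by
    filter_upwards [ae_le_lpNorm_exponent_top hmem] with y hy
    rw [← toReal_eLpNorm hmem.aestronglyMeasurable] at hy
    exact min_eq_left hy
  exact min_eq_left_iff.1
    (Measure.eqOn_of_ae_eq hae (hg.norm.inf continuousOn_const) hg.norm hs hx)

lemma norm_le_toReal_eLpNorm_top_of_periodic {g : ℝ → E} {c : ℝ} (hc : 0 < c)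
    (hg : Continuous g) (hper : Periodic g c) (a x : ℝ) :
    ‖g x‖ ≤ (eLpNorm g ⊤ (volume.restrict (Ioc a (a + c)))).toReal := by
  obtain ⟨K, hK⟩ := (hper.isBounded_of_continuous hc.ne' hg).exists_norm_le
  have hmem : MemLp g ⊤ (volume.restrict (Ioc a (a + c))) :=
    memLp_top_of_bound hg.aestronglyMeasurable K (.of_forall fun y => hK _ (mem_range_self y))
  obtain ⟨y, hy, hxy⟩ := hper.exists_mem_Ioc hc x a
  rw [hxy]
  exact norm_le_toReal_eLpNorm_top_of_continuousOn hg.continuousOn hmem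
    (Ioc_subset_closure_interior _ _) hy

end SupNorm

lemma sobLp_one_one (v : ℝ → ℝ) : sobLp 1 1 v = ∫ x in Ioc (0 : ℝ) 1, |deriv v x| := by
  have hmeas : AEStronglyMeasurable (deriv v) (volume.restrict (Ioc (0 : ℝ) 1)) :=
    (stronglyMeasurable_deriv v).aestronglyMeasurable
  rw [sobLp, iteratedDeriv_one, toReal_eLpNorm hmeas, lpNorm_one_eq_integral_norm hmeas]
  simp only [Real.norm_eq_abs]

lemma abs_deriv_le_sobLp_one_top {v : ℝ → ℝ} (hv : ContDiff ℝ 1 v) (hper : Periodic v 1)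
    (x : ℝ) : |deriv v x| ≤ sobLp 1 ⊤ v := by
  simpa only [sobLp, iteratedDeriv_one, zero_add, Real.norm_eq_abs] using
    norm_le_toReal_eLpNorm_top_of_periodic one_pos hv.continuous_deriv_one
      (periodic_deriv hper) 0 x

section Burgers

variable {f : ℝ → ℝ} {ν : ℝ} {u : ℝ → ℝ → ℝ}

lemma hasDerivAt_deriv_of_burgers (hf : ContDiff ℝ 2 f) {t x : ℝ}
    (hu : ContDiffAt ℝ 3 (uncurry u) (t, x))
    (hpde : ∀ᶠ y in 𝓝 x, deriv (fun s => u s y) t + deriv f (u t y) * deriv (u t) y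
      - ν * deriv (deriv (u t)) y = 0) :
    HasDerivAt (fun s => deriv (u s) x)
      (ν * deriv (deriv (deriv (u t))) x
        - (iteratedDeriv 2 f (u t x) * deriv (u t) x ^ 2
          + deriv f (u t x) * deriv (deriv (u t)) x)) t := by
  have hut : ContDiffAt ℝ 3 (u t) x := hu.comp x (contDiff_prodMk_right t).contDiffAt
  have hut' : ContDiffAt ℝ 2 (deriv (u t)) x := hut.derivWithin (by norm_num)
  have hut'' : ContDiffAt ℝ 1 (deriv (deriv (u t))) x := hut'.derivWithin (by norm_num)
  have hf' : HasDerivAt (deriv f) (iteratedDeriv 2 f (u t x)) (u t x) := by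
    rw [iteratedDeriv_succ, iteratedDeriv_one]
    exact (hf.differentiable_deriv_two (u t x)).hasDerivAt
  have htime : (fun y => deriv (fun s => u s y) t) =ᶠ[𝓝 x]
      fun y => ν * deriv (deriv (u t)) y - deriv f (u t y) * deriv (u t) y :=
    hpde.mono fun y hy => by linarith
  have hspeed : HasDerivAt (fun y => deriv f (u t y))
      (iteratedDeriv 2 f (u t x) * deriv (u t) x) x :=
    hf'.comp x (hut.differentiableAt three_ne_zero).hasDerivAt
  have hrhs := ((hut''.differentiableAt one_ne_zero).hasDerivAt.const_mul ν).sub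
    (hspeed.mul (hut'.differentiableAt two_ne_zero).hasDerivAt)
  refine (hasDerivAt_deriv_slice (hu.of_le (by norm_num))).congr_deriv ?_
  rw [htime.deriv_eq]
  refine hrhs.deriv.trans ?_
  ring

variable {σ : ℝ}

lemma exists_hasDerivAt_deriv_le_neg_mul_sq (hf : ContDiff ℝ 2 f)
    (hconv : ∀ y, σ ≤ iteratedDeriv 2 f y) (hν : 0 ≤ ν) {t x : ℝ}
    (hu : ContDiffAt ℝ 3 (uncurry u) (t, x))
    (hpde : ∀ᶠ y in 𝓝 x, deriv (fun s => u s y) t + deriv f (u t y) * deriv (u t) y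
      - ν * deriv (deriv (u t)) y = 0)
    (hmax : IsLocalMax (deriv (u t)) x) :
    ∃ d ≤ -(σ * deriv (u t) x ^ 2), HasDerivAt (fun s => deriv (u s) x) d t := by
  refine ⟨_, ?_, hasDerivAt_deriv_of_burgers hf hu hpde⟩
  have hut : ContDiffAt ℝ 3 (u t) x := hu.comp x (contDiff_prodMk_right t).contDiffAt
  have hcont : ContinuousAt (deriv (u t)) x := (hut.derivWithin (m := 2) (by norm_num)).continuousAt
  have hdiffusion : ν * deriv (deriv (deriv (u t))) x ≤ 0 :=
    mul_nonpos_of_nonneg_of_nonpos hν (deriv_deriv_nonpos_of_isLocalMax hcont hmax)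
  have hsq : σ * deriv (u t) x ^ 2 ≤ iteratedDeriv 2 f (u t x) * deriv (u t) x ^ 2 := by
    gcongr
    exact hconv _
  rw [hmax.deriv_eq_zero, mul_zero, add_zero]
  linarith

theorem deriv_le_div_one_add_mul_of_burgers (hf : ContDiff ℝ 2 f) (hσ : 0 < σ)
    (hconv : ∀ y, σ ≤ iteratedDeriv 2 f y) (hν : 0 ≤ ν)
    (hu : ContDiffOn ℝ 3 (uncurry u) (Ici (0 : ℝ) ×ˢ univ)) {c : ℝ} (hc : 0 < c)
    (hper : ∀ t, 0 ≤ t → Periodic (u t) c)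
    (hpde : ∀ t, 0 < t → ∀ x, deriv (fun s => u s x) t + deriv f (u t x) * deriv (u t) x
      - ν * deriv (deriv (u t)) x = 0)
    {M : ℝ} (hinit : ∀ x, deriv (u 0) x ≤ M) {T : ℝ} (hT : 0 ≤ T) (x : ℝ) :
    deriv (u T) x ≤ M / (1 + σ * M * T) := by
  have hM : 0 ≤ M := by
    obtain ⟨z, -, hz⟩ := exists_deriv_eq_zero hc
      (contDiff_slice hu self_mem_Ici).continuous.continuousOn (hper 0 le_rfl).eq.symm
    exact hz ▸ hinit z
  have hcoef : ∀ {t : ℝ}, 0 ≤ t → 0 < 1 + σ * M * t := fun ht => by positivity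
  rw [le_div_iff₀' (hcoef hT)]
  have hcont : ContinuousOn (uncurry fun t => deriv (u t)) (Icc 0 T ×ˢ univ) :=
    (continuousOn_deriv_slice (uniqueDiffOn_Ici 0) (hu.of_le (by norm_num))).mono
      (prod_mono_left Icc_subset_Ici_self)
  refine le_of_forall_spatial_max_hasDerivAt_neg (a := 0) (b := T)
    (w := fun t x => (1 + σ * M * t) * deriv (u t) x) hc
    (fun t ht x => by simp only [periodic_deriv (hper t ht.1) x])
    ((show Continuous fun p : ℝ × ℝ => 1 + σ * M * p.1 by fun_prop).continuousOn.mul hcont)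
    (by simpa using hinit) ?_ ⟨hT, le_rfl⟩ x
  rintro t ⟨ht, -⟩ x hmax hlt
  have hvmax : IsLocalMax (deriv (u t)) x :=
    .of_forall fun y => le_of_mul_le_mul_left (hmax y) (hcoef ht.le)
  have hvpos : 0 < deriv (u t) x := pos_of_mul_pos_right (hM.trans_lt hlt) (hcoef ht.le).le
  obtain ⟨d, hd, hderiv⟩ := exists_hasDerivAt_deriv_le_neg_mul_sq hf hconv hν
    (hu.contDiffAt (prod_mem_nhds (Ici_mem_nhds ht) univ_mem)) (.of_forall (hpde t ht)) hvmax
  have hlin : HasDerivAt (fun s => 1 + σ * M * s) (σ * M) t := by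
    simpa using ((hasDerivAt_id t).const_mul (σ * M)).const_add 1
  refine ⟨_, ?_, hlin.mul hderiv⟩
  calc σ * M * deriv (u t) x + (1 + σ * M * t) * d
      ≤ σ * M * deriv (u t) x + (1 + σ * M * t) * -(σ * deriv (u t) x ^ 2) := by
        gcongr
    _ = σ * deriv (u t) x * (M - (1 + σ * M * t) * deriv (u t) x) := by ring
    _ < 0 := mul_neg_of_pos_of_neg (by positivity) (sub_neg.2 hlt)

end Burgers

lemma div_one_add_mul_le_min {σ M t : ℝ} (hσ : 0 < σ) (hM : 0 ≤ M) (ht : 0 < t) :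
    M / (1 + σ * M * t) ≤ min M (σ⁻¹ * t⁻¹) := by
  refine le_min (div_le_self hM (by simpa using by positivity)) ?_
  rw [← mul_inv, inv_eq_one_div, div_le_div_iff₀ (by positivity) (by positivity)]
  linarith

theorem statement2_general {f : ℝ → ℝ} {σ ν : ℝ} {u : ℝ → ℝ → ℝ} (hf : ContDiff ℝ 2 f)
    (hσ : 0 < σ) (hconv : ∀ y, σ ≤ iteratedDeriv 2 f y) (hν : 0 ≤ ν)
    (hu : ContDiffOn ℝ 3 (uncurry u) (Ici (0 : ℝ) ×ˢ univ))
    (hper : ∀ t, 0 ≤ t → Periodic (u t) 1)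
    (hpde : ∀ t, 0 < t → ∀ x, deriv (fun s => u s x) t + deriv f (u t x) * deriv (u t) x
      - ν * deriv (deriv (u t)) x = 0) {t : ℝ} (ht : 0 < t) :
    sobLp 1 1 (u t) = ∫ x in Ioc (0 : ℝ) 1, |deriv (u t) x| ∧
    (∫ x in Ioc (0 : ℝ) 1, |deriv (u t) x|) = 2 * ∫ x in Ioc (0 : ℝ) 1, max (deriv (u t) x) 0 ∧
    2 * (∫ x in Ioc (0 : ℝ) 1, max (deriv (u t) x) 0) ≤
      2 * min (sobLp 1 ⊤ (u 0)) (σ⁻¹ * t⁻¹) := by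
  have hC1 : ∀ {s : ℝ}, 0 ≤ s → ContDiff ℝ 1 (u s) := fun hs =>
    (contDiff_slice hu hs).of_le (by norm_num)
  have hmean : ∫ x in Ioc (0 : ℝ) 1, deriv (u t) x = 0 := by
    simpa using integral_deriv_Ioc_eq_zero_of_periodic zero_le_one (hC1 ht.le) (hper t ht.le) 0
  have hint : IntegrableOn (deriv (u t)) (Ioc 0 1) :=
    (hC1 ht.le).continuous_deriv_one.integrableOn_Ioc
  have hM : 0 ≤ sobLp 1 ⊤ (u 0) := ENNReal.toReal_nonneg
  have hbound : ∀ x, deriv (u t) x ≤ min (sobLp 1 ⊤ (u 0)) (σ⁻¹ * t⁻¹) := fun x =>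
    (deriv_le_div_one_add_mul_of_burgers hf hσ hconv hν hu one_pos hper hpde
      (fun y => (le_abs_self _).trans (abs_deriv_le_sobLp_one_top (hC1 le_rfl) (hper 0 le_rfl) y))
      ht.le x).trans (div_one_add_mul_le_min hσ hM ht)
  have : IsProbabilityMeasure (volume.restrict (Ioc (0 : ℝ) 1)) := ⟨by simp⟩
  exact ⟨sobLp_one_one _, integral_abs_eq_two_mul_integral_max_zero hint hmean,
    by gcongr; exact integral_max_zero_le_of_le (le_min hM (by positivity)) hbound⟩

/-- For every `t > 0`, the total variation satisfies
`|u(t)|_{1,1} = ∫_{S¹} |u_x(t)| = 2 ∫_{S¹} u_x(t)⁺ ≤ 2 min(D, σ⁻¹ t⁻¹)`. -/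
theorem statement2 (f : ℝ → ℝ) (σ ν : ℝ) (u : ℝ → ℝ → ℝ)
    (hsol : IsBurgersSolution f σ ν u) :
    ∀ t, 0 < t →
      sobLp 1 1 (u t) = ∫ x in Ioc (0:ℝ) 1, |deriv (u t) x| ∧
      (∫ x in Ioc (0:ℝ) 1, |deriv (u t) x|)
        = 2 * ∫ x in Ioc (0:ℝ) 1, max (deriv (u t) x) 0 ∧
      2 * (∫ x in Ioc (0:ℝ) 1, max (deriv (u t) x) 0)
        ≤ 2 * min (burgersD u) (σ⁻¹ * t⁻¹) := by
  intro t ht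
  obtain ⟨hnorm, hpos, hle⟩ := statement2_general (contDiff_infty.1 hsol.hf 2) hsol.hσ hsol.hconv
    hsol.hν.le (contDiffOn_infty.1 hsol.hu 3) (fun s _ => hsol.hper s) hsol.hpde ht
  exact ⟨hnorm, hpos, hle.trans (by gcongr; exact le_max_right _ _)⟩
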